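/- The up-walk transition matrix P^{up} on S_k = X_k^± ∪ {Θ} is row-stochastic: every entry lies in [0,1] and every row sums to 1. -/

import Mathlib

open BigOperators Matrix Kronecker

attribute [local instance] Classical.propDecidable

noncomputable section

namespace QWSC

/-- A finite abstract simplicial complex on the vertex set `Fin n`:
a family of vertex sets closed under taking subsets. -/
def IsComplex (n : ℕ) (X : Finset (Finset (Fin n))) : Prop :=
  ∀ s ∈ X, ∀ t ⊆ s, t ∈ X

/-- The weighted boundary operator `∂_k : C_k → C_{k-1}` written as a matrix in the
orthonormal chain bases (rows are indexed by `(k-1)`-simplices, columns by `k`-simplices;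
a `k`-simplex has `k+1` vertices).  On the orthonormal basis vector of
`σ = {v_0 < … < v_k}` it has entries `(-1)^j w(v_j)` at the face `σ \ {v_j}`. -/
def boundary (n : ℕ) (X : Finset (Finset (Fin n))) (w : Fin n → ℝ) (k : ℕ) :
    Matrix (Finset (Fin n)) (Finset (Fin n)) ℝ :=
  Matrix.of fun τ σ =>
    if σ ∈ X ∧ σ.card = k + 1 ∧ τ ⊆ σ ∧ τ.card = k then
      ∑ v ∈ σ \ τ, (-1 : ℝ) ^ ((σ.filter fun u => u < v).card) * w v
    else 0

/-- The weighted up Laplacian `Δ_k^{up} = ∂_{k+1} ∂_{k+1}^*`. -/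
def upLap (n : ℕ) (X : Finset (Finset (Fin n))) (w : Fin n → ℝ) (k : ℕ) :
    Matrix (Finset (Fin n)) (Finset (Fin n)) ℝ :=
  boundary n X w (k + 1) * (boundary n X w (k + 1))ᵀ

/-- The weighted down Laplacian `Δ_k^{down} = ∂_k^* ∂_k`. -/
def downLap (n : ℕ) (X : Finset (Finset (Fin n))) (w : Fin n → ℝ) (k : ℕ) :
    Matrix (Finset (Fin n)) (Finset (Fin n)) ℝ :=
  (boundary n X w k)ᵀ * boundary n X w k

/-- The weighted combinatorial Laplacian `Δ_k = Δ_k^{up} + Δ_k^{down}`. -/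
def fullLap (n : ℕ) (X : Finset (Finset (Fin n))) (w : Fin n → ℝ) (k : ℕ) :
    Matrix (Finset (Fin n)) (Finset (Fin n)) ℝ :=
  upLap n X w k + downLap n X w k

/-- `true` iff removing the vertex `v` from `σ` reverses the induced orientation,
i.e. the position of `v` in the increasing ordering of `σ` is odd. -/
def faceFlip (n : ℕ) (σ : Finset (Fin n)) (v : Fin n) : Bool :=
  decide ((σ.filter fun u => u < v).card % 2 = 1)

/-- An oriented simplex: a vertex set together with an orientation bit
(`false` = positively oriented, `true` = negatively oriented). -/
abbrev OSimp (n : ℕ) := Finset (Fin n) × Bool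

/-- Up-adjacency `σ ∼↑ σ'` of oriented simplices: the vertex sets are distinct, their
union is a common coface belonging to `X`, and the orientations induced on the common
coface by `σ` and by `σ'` agree. -/
def UpAdj (n : ℕ) (X : Finset (Finset (Fin n))) (σ σ' : OSimp n) : Prop :=
  σ.1 ≠ σ'.1 ∧ σ.1 ∪ σ'.1 ∈ X ∧ (σ.1 ∪ σ'.1).card = σ.1.card + 1 ∧
    σ'.1.card = σ.1.card ∧
    ∀ v ∈ σ'.1 \ σ.1, ∀ v' ∈ σ.1 \ σ'.1,
      xor σ.2 (faceFlip n (σ.1 ∪ σ'.1) v) = xor σ'.2 (faceFlip n (σ.1 ∪ σ'.1) v')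

/-- Down-adjacency `σ ∼↓ σ'` of oriented simplices: the vertex sets are distinct, they
share a common face (their intersection, of cardinality one less), and the orientations
induced on the common face by `σ` and by `σ'` agree. -/
def DownAdj (n : ℕ) (σ σ' : OSimp n) : Prop :=
  σ.1 ≠ σ'.1 ∧ (σ.1 ∩ σ'.1).card + 1 = σ.1.card ∧ σ'.1.card = σ.1.card ∧
    ∀ v ∈ σ.1 \ σ'.1, ∀ v' ∈ σ'.1 \ σ.1,
      xor σ.2 (faceFlip n σ.1 v) = xor σ'.2 (faceFlip n σ'.1 v')

/-- `up(σ)`: the vertices `u ∉ σ` with `σ ∪ {u} ∈ X`. -/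
def upSet (n : ℕ) (X : Finset (Finset (Fin n))) (σ : Finset (Fin n)) : Finset (Fin n) :=
  Finset.univ.filter fun u => u ∉ σ ∧ insert u σ ∈ X

/-- The set of `k`-simplices of `X` (those with `k+1` vertices). -/
def simplices (n : ℕ) (X : Finset (Finset (Fin n))) (k : ℕ) : Finset (Finset (Fin n)) :=
  X.filter fun s => s.card = k + 1

/-- Normalization constant `K^{up} = max_{σ∈X_k} Σ_{u∈V∖σ} Σ_{v∈σ∪{u}} w(u)w(v)`. -/
def Kup (n : ℕ) (X : Finset (Finset (Fin n))) (w : Fin n → ℝ) (k : ℕ) : ℝ :=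
  sSup {x : ℝ | ∃ σ ∈ X, σ.card = k + 1 ∧ x = ∑ u ∈ σᶜ, ∑ v ∈ insert u σ, w u * w v}

/-- Normalization constant `K^{down} = max_{σ∈X_k} Σ_{u∈σ} Σ_{v∈V∖(σ∖{u})} w(u)w(v)`. -/
def Kdown (n : ℕ) (X : Finset (Finset (Fin n))) (w : Fin n → ℝ) (k : ℕ) : ℝ :=
  sSup {x : ℝ | ∃ σ ∈ X, σ.card = k + 1 ∧ x = ∑ u ∈ σ, ∑ v ∈ (σ.erase u)ᶜ, w u * w v}

/-- Normalization constant `K = max_{σ∈X_k} (Σ_{v∈V} w(v)² + Σ_{u∈V∖σ} Σ_{v∈σ} w(u)w(v))`. -/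
def Kfull (n : ℕ) (X : Finset (Finset (Fin n))) (w : Fin n → ℝ) (k : ℕ) : ℝ :=
  sSup {x : ℝ | ∃ σ ∈ X, σ.card = k + 1 ∧
    x = (∑ v : Fin n, w v ^ 2) + ∑ u ∈ σᶜ, ∑ v ∈ σ, w u * w v}

/-- The `k`-th chain space `C_k`: the span of the basis vectors indexed by
`k`-simplices of `X`, inside the coordinate space of the orthonormal chain basis. -/
def chainSpace (n : ℕ) (X : Finset (Finset (Fin n))) (k : ℕ) :
    Submodule ℝ (Finset (Fin n) → ℝ) :=
  Submodule.span ℝ ((fun σ => Pi.single σ (1 : ℝ)) '' {σ | σ ∈ X ∧ σ.card = k + 1})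

/-- The state space `S_k = X_k^± ∪ {Θ}` of the walks; `none` is the absorbing state `Θ`. -/
abbrev SState (n : ℕ) := Option (OSimp n)

/-- A state is a member of `S_k`: either the absorbing state, or an oriented
`k`-simplex of `X`. -/
def valid (n : ℕ) (X : Finset (Finset (Fin n))) (k : ℕ) : SState n → Prop
  | none => True
  | some σ => σ.1 ∈ X ∧ σ.1.card = k + 1

/-- `η^{up}_σ = 1 − (1/K^{up}) Σ_{τ∈X_k^+} |(Δ_k^{up})_{τ,σ_+}|`. -/
def etaUp (n : ℕ) (X : Finset (Finset (Fin n))) (w : Fin n → ℝ) (k : ℕ) (σ : OSimp n) : ℝ :=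
  1 - (∑ τ ∈ simplices n X k, |upLap n X w k τ σ.1|) / Kup n X w k

/-- `η^{down}_σ = 1 − (1/K^{down}) Σ_{τ∈X_k^+} |(Δ_k^{down})_{τ,σ_+}|`. -/
def etaDown (n : ℕ) (X : Finset (Finset (Fin n))) (w : Fin n → ℝ) (k : ℕ) (σ : OSimp n) : ℝ :=
  1 - (∑ τ ∈ simplices n X k, |downLap n X w k τ σ.1|) / Kdown n X w k

/-- `η_σ = 1 − (1/K) Σ_{τ∈X_k^+} |(Δ_k)_{τ,σ_+}|`. -/
def etaFull (n : ℕ) (X : Finset (Finset (Fin n))) (w : Fin n → ℝ) (k : ℕ) (σ : OSimp n) : ℝ :=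
  1 - (∑ τ ∈ simplices n X k, |fullLap n X w k τ σ.1|) / Kfull n X w k

/-- The up-walk transition matrix `P^{up}` on `S_k`. -/
def Pup (n : ℕ) (X : Finset (Finset (Fin n))) (w : Fin n → ℝ) (k : ℕ) :
    SState n → SState n → ℝ
  | some σ, some σ' =>
      if σ.1 ∈ X ∧ σ.1.card = k + 1 ∧ σ'.1 ∈ X ∧ σ'.1.card = k + 1 then
        if σ = σ' then (∑ u ∈ upSet n X σ.1, w u ^ 2) / Kup n X w k
        else if UpAdj n X σ σ' then
          ((∑ v ∈ σ.1 \ σ'.1, w v) * (∑ v ∈ σ'.1 \ σ.1, w v)) / Kup n X w k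
        else 0
      else 0
  | some σ, none => if σ.1 ∈ X ∧ σ.1.card = k + 1 then etaUp n X w k σ else 0
  | none, none => 1
  | none, some _ => 0

/-- The down-walk transition matrix `P^{down}` on `S_k`. -/
def Pdown (n : ℕ) (X : Finset (Finset (Fin n))) (w : Fin n → ℝ) (k : ℕ) :
    SState n → SState n → ℝ
  | some σ, some σ' =>
      if σ.1 ∈ X ∧ σ.1.card = k + 1 ∧ σ'.1 ∈ X ∧ σ'.1.card = k + 1 then
        if σ = σ' then (∑ v ∈ σ.1, w v ^ 2) / Kdown n X w k
        else if DownAdj n σ σ' then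
          ((∑ v ∈ σ.1 \ σ'.1, w v) * (∑ v ∈ σ'.1 \ σ.1, w v)) / Kdown n X w k
        else 0
      else 0
  | some σ, none => if σ.1 ∈ X ∧ σ.1.card = k + 1 then etaDown n X w k σ else 0
  | none, none => 1
  | none, some _ => 0

/-- The harmonic-walk transition matrix `P` on `S_k`. -/
def Pharm (n : ℕ) (X : Finset (Finset (Fin n))) (w : Fin n → ℝ) (k : ℕ) :
    SState n → SState n → ℝ
  | some σ, some σ' =>
      if σ.1 ∈ X ∧ σ.1.card = k + 1 ∧ σ'.1 ∈ X ∧ σ'.1.card = k + 1 then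
        if σ = σ' then
          ((∑ u ∈ upSet n X σ.1, w u ^ 2) + ∑ v ∈ σ.1, w v ^ 2) / Kfull n X w k
        else if DownAdj n σ σ' ∧ ¬ UpAdj n X σ (σ'.1, !σ'.2) then
          ((∑ v ∈ σ.1 \ σ'.1, w v) * (∑ v ∈ σ'.1 \ σ.1, w v)) / Kfull n X w k
        else 0
      else 0
  | some σ, none => if σ.1 ∈ X ∧ σ.1.card = k + 1 then etaFull n X w k σ else 0
  | none, none => 1
  | none, some _ => 0

/-! ### Quantum encodings -/

/-- The computational basis of `(ℂ²)^{⊗(n+2)}`: `n` membership qubits, one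
orientation qubit, and one qubit flagging the absorbing state. -/
abbrev QIdx (n : ℕ) := (Fin n → Bool) × Bool × Bool

/-- The encoding of states of `S_k` as computational basis states:
`|σ⟩ = |x_σ⟩|s(σ)⟩|0⟩` and `|Θ⟩ = |0^n⟩|0⟩|1⟩`. -/
def encode (n : ℕ) : SState n → QIdx n
  | none => (fun _ => false, false, true)
  | some σ => (fun i => decide (i ∈ σ.1), σ.2, false)

/-- The all-zeros basis state `|0^{n+2}⟩`. -/
def zeroQ (n : ℕ) : QIdx n := (fun _ => false, false, false)

/-- The projector `Π_k^±` onto the span of the encoded oriented `k`-simplices of `X`. -/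
def PiPM (n : ℕ) (X : Finset (Finset (Fin n))) (k : ℕ) : Matrix (QIdx n) (QIdx n) ℂ :=
  Matrix.of fun p q =>
    if p = q ∧ ∃ σ : OSimp n, σ.1 ∈ X ∧ σ.1.card = k + 1 ∧ p = encode n (some σ) then 1 else 0

/-- The projector `Π_k` onto the span of the encoded positively oriented
`k`-simplices of `X`. -/
def PiK (n : ℕ) (X : Finset (Finset (Fin n))) (k : ℕ) : Matrix (QIdx n) (QIdx n) ℂ :=
  Matrix.of fun p q =>
    if p = q ∧ ∃ s ∈ X, s.card = k + 1 ∧ p = encode n (some (s, false)) then 1 else 0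

/-- Decode a basis state into the state of `S_k` it represents (if any). -/
def decodeQ (n : ℕ) : QIdx n → Option (SState n) := fun q =>
  if q.2.2 = false then some (some ((Finset.univ.filter fun i => q.1 i = true), q.2.1))
  else if q = encode n none then some none else none

/-- Identify a transition kernel `P` on `S_k` with the operator on `(ℂ²)^{⊗(n+2)}`
having `⟨σ'|P|σ⟩ = P_{σ,σ'}` for `σ, σ' ∈ S_k`, vanishing off the span of `S_k`. -/
def toQMat (n : ℕ) (P : SState n → SState n → ℝ) : Matrix (QIdx n) (QIdx n) ℂ :=
  Matrix.of fun q' q =>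
    match decodeQ n q, decodeQ n q' with
    | some σ, some σ' => (P σ σ' : ℂ)
    | _, _ => 0

/-- Identify a matrix indexed by vertex sets (acting on the chain space in the
orthonormal basis of positively oriented simplices) with an operator on
`(ℂ²)^{⊗(n+2)}` supported on the encoded positively oriented simplices. -/
def lapQ (n : ℕ) (L : Matrix (Finset (Fin n)) (Finset (Fin n)) ℝ) :
    Matrix (QIdx n) (QIdx n) ℂ :=
  Matrix.of fun q' q =>
    if q'.2.1 = false ∧ q'.2.2 = false ∧ q.2.1 = false ∧ q.2.2 = false then
      (L (Finset.univ.filter fun i => q'.1 i = true)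
         (Finset.univ.filter fun i => q.1 i = true) : ℂ)
    else 0

/-- The SWAP unitary exchanging the two `(n+2)`-qubit registers. -/
def swapMat (n : ℕ) : Matrix (QIdx n × QIdx n) (QIdx n × QIdx n) ℂ :=
  Matrix.of fun p q => if p.1 = q.2 ∧ p.2 = q.1 then 1 else 0

/-- The compression `(· ⊗ ⟨0^{n+2}|) W (· ⊗ |0^{n+2}⟩)` of an operator on two
`(n+2)`-qubit registers to the first register. -/
def compress (n : ℕ) (W : Matrix (QIdx n × QIdx n) (QIdx n × QIdx n) ℂ) :
    Matrix (QIdx n) (QIdx n) ℂ :=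
  Matrix.of fun q' q => W (q', zeroQ n) (q, zeroQ n)

/-- The compression `(· ⊗ ⟨0^α|) W (· ⊗ |0^α⟩)` of an operator on the system
register together with an `α`-qubit ancilla register. -/
def compressA (n α : ℕ) (W : Matrix (QIdx n × (Fin α → Bool)) (QIdx n × (Fin α → Bool)) ℂ) :
    Matrix (QIdx n) (QIdx n) ℂ :=
  Matrix.of fun q' q => W (q', fun _ => false) (q, fun _ => false)

/-- The gate `I^{⊗n} ⊗ (HZ) ⊗ I` acting on the orientation qubit, where `H` is the
Hadamard gate and `Z` the Pauli-Z gate. -/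
def hzGate (n : ℕ) : Matrix (QIdx n) (QIdx n) ℂ :=
  Matrix.of fun p q =>
    if p.1 = q.1 ∧ p.2.2 = q.2.2 then
      (if p.2.1 = false ∧ q.2.1 = true then -((Real.sqrt 2 : ℂ))⁻¹ else ((Real.sqrt 2 : ℂ))⁻¹)
    else 0


/-! The oriented transition probabilities from `σ` to the two orientations of `τ` add up to
`|Δ_{τ,σ}| / K`: on the diagonal `Δ_{σ,σ} = ∑_{u ∈ up(σ)} w(u)²`, and for `τ ≠ σ` the only possible
common coface is `σ ∪ τ`, so `Δ_{τ,σ}` is a single product, while exactly one orientation of `τ`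
induces the same orientation of `σ ∪ τ` as `σ` does. The absorption probability `η_σ` is therefore
the missing mass. It is nonnegative because
`∑_τ |Δ_{τ,σ}| ≤ ∑_ρ |∂_{σ,ρ}| ∑_τ |∂_{τ,ρ}| ≤ ∑_{u ∉ σ} w(u) ∑_{v ∈ σ ∪ {u}} w(v) ≤ K`. -/

section CoverSums

variable {α M : Type*} [Fintype α] [DecidableEq α] [AddCommMonoid M] {f : Finset α → M}

lemma sum_eq_sum_compl_insert (s : Finset α) (hf : ∀ t, ¬ s ⋖ t → f t = 0) :
    ∑ t, f t = ∑ a ∈ sᶜ, f (insert a s) := by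
  refine (Finset.sum_of_injOn (insert · s) (Finset.insert_inj_on' s) (by simp)
    (fun t _ ht => hf t fun hst => ht ?_) fun _ _ => rfl).symm
  obtain ⟨a, ha, rfl⟩ := hst.exists_finset_insert
  exact ⟨a, by simpa using ha, rfl⟩

lemma sum_eq_sum_erase (t : Finset α) (hf : ∀ s, ¬ s ⋖ t → f s = 0) :
    ∑ s, f s = ∑ a ∈ t, f (t.erase a) := by
  refine (Finset.sum_of_injOn t.erase t.erase_injOn (by simp)
    (fun s _ hs => hf s fun hst => hs ?_) fun _ _ => rfl).symm
  obtain ⟨a, ha, rfl⟩ := hst.exists_finset_erase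
  exact ⟨a, ha, rfl⟩

end CoverSums

section UpLaplacian

variable {n k : ℕ} (X : Finset (Finset (Fin n))) (w : Fin n → ℝ) {σ τ ρ : Finset (Fin n)}

lemma boundary_eq_zero_of_not_covBy (h : ¬ τ ⋖ ρ) : boundary n X w k τ ρ = 0 := by
  refine if_neg fun ⟨_, hρ, hsub, hτ⟩ => h ?_
  refine Finset.covBy_iff_card_sdiff_eq_one.2 ⟨hsub, ?_⟩
  rw [Finset.card_sdiff_of_subset hsub, hρ, hτ, Nat.add_sub_cancel_left]

lemma abs_boundary (k : ℕ) (τ ρ : Finset (Fin n)) :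
    |boundary n X w k τ ρ| =
      if ρ ∈ X ∧ ρ.card = k + 1 ∧ τ ⊆ ρ ∧ τ.card = k then ∑ v ∈ ρ \ τ, |w v| else 0 := by
  simp only [boundary, Matrix.of_apply]
  split_ifs with h
  · obtain ⟨_, hρ, hsub, hτ⟩ := h
    obtain ⟨v, hv⟩ : ∃ v, ρ \ τ = {v} := by
      rw [← Finset.card_eq_one, Finset.card_sdiff_of_subset hsub, hρ, hτ, Nat.add_sub_cancel_left]
    simp [hv, abs_mul]
  · exact abs_zero

lemma abs_boundary_le (k : ℕ) (τ ρ : Finset (Fin n)) :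
    |boundary n X w k τ ρ| ≤ ∑ v ∈ ρ \ τ, |w v| := by
  rw [abs_boundary]
  split_ifs
  · exact le_rfl
  · exact Finset.sum_nonneg fun v _ => abs_nonneg (w v)

lemma sum_abs_boundary_le (k : ℕ) (ρ : Finset (Fin n)) :
    ∑ τ, |boundary n X w k τ ρ| ≤ ∑ v ∈ ρ, |w v| := by
  rw [sum_eq_sum_erase ρ fun τ h => by rw [boundary_eq_zero_of_not_covBy X w h, abs_zero]]
  refine Finset.sum_le_sum fun v hv => (abs_boundary_le X w k _ ρ).trans_eq ?_
  rw [Finset.sdiff_erase_self hv, Finset.sum_singleton]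

lemma upLap_apply (k : ℕ) (τ σ : Finset (Fin n)) :
    upLap n X w k τ σ = ∑ ρ, boundary n X w (k + 1) τ ρ * boundary n X w (k + 1) σ ρ :=
  rfl

lemma sum_abs_upLap_le (k : ℕ) (σ : Finset (Fin n)) :
    ∑ τ, |upLap n X w k τ σ| ≤ ∑ u ∈ σᶜ, ∑ v ∈ insert u σ, |w u| * |w v| := by
  set B := boundary n X w (k + 1)
  calc ∑ τ, |upLap n X w k τ σ|
      ≤ ∑ τ, ∑ ρ, |B τ ρ| * |B σ ρ| := by
        refine Finset.sum_le_sum fun τ _ => ?_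
        simp only [upLap_apply, ← abs_mul]
        exact Finset.abs_sum_le_sum_abs _ _
    _ = ∑ ρ, |B σ ρ| * ∑ τ, |B τ ρ| := by
        rw [Finset.sum_comm]
        simp only [Finset.mul_sum, mul_comm]
    _ = ∑ u ∈ σᶜ, |B σ (insert u σ)| * ∑ τ, |B τ (insert u σ)| :=
        sum_eq_sum_compl_insert σ fun ρ h => by
          have hB : B σ ρ = 0 := boundary_eq_zero_of_not_covBy X w h
          rw [hB, abs_zero, zero_mul]
    _ ≤ ∑ u ∈ σᶜ, |w u| * ∑ v ∈ insert u σ, |w v| := by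
        refine Finset.sum_le_sum fun u hu => ?_
        have hface : |B σ (insert u σ)| ≤ |w u| := by
          simpa only [Finset.insert_sdiff_cancel (Finset.mem_compl.1 hu), Finset.sum_singleton]
            using abs_boundary_le X w (k + 1) σ (insert u σ)
        exact mul_le_mul hface (sum_abs_boundary_le X w (k + 1) (insert u σ))
          (Finset.sum_nonneg fun τ _ => abs_nonneg (B τ (insert u σ))) (abs_nonneg (w u))
    _ = ∑ u ∈ σᶜ, ∑ v ∈ insert u σ, |w u| * |w v| := by
        simp only [Finset.mul_sum]

lemma upLap_self (hσ : σ.card = k + 1) : upLap n X w k σ σ = ∑ u ∈ upSet n X σ, w u ^ 2 := by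
  have hup : upSet n X σ = {u ∈ σᶜ | insert u σ ∈ X} := by
    ext u
    simp [upSet]
  rw [upLap_apply, hup, Finset.sum_filter, sum_eq_sum_compl_insert σ fun ρ h => by
    rw [boundary_eq_zero_of_not_covBy X w h, zero_mul]]
  refine Finset.sum_congr rfl fun u hu => ?_
  have huσ : u ∉ σ := Finset.mem_compl.1 hu
  rw [← abs_mul_abs_self, abs_boundary]
  by_cases h : insert u σ ∈ X <;> simp [h, huσ, hσ, sq]

lemma upLap_of_ne (k : ℕ) (hne : τ ≠ σ) :
    upLap n X w k τ σ =
      boundary n X w (k + 1) τ (τ ∪ σ) * boundary n X w (k + 1) σ (τ ∪ σ) := by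
  rw [upLap_apply]
  refine Fintype.sum_eq_single _ fun ρ hρ => ?_
  by_cases hτ : τ ⋖ ρ
  · have hσ : ¬ σ ⋖ ρ := fun hσ => hρ (hτ.wcovBy.sup_eq hσ.wcovBy hne).symm
    rw [boundary_eq_zero_of_not_covBy X w hσ, mul_zero]
  · rw [boundary_eq_zero_of_not_covBy X w hτ, zero_mul]

lemma abs_upLap_of_ne (hτ : τ.card = k + 1) (hσ : σ.card = k + 1) (hne : τ ≠ σ) :
    |upLap n X w k τ σ| =
      if τ ∪ σ ∈ X ∧ (τ ∪ σ).card = k + 2 then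
        (∑ v ∈ τ \ σ, |w v|) * ∑ v ∈ σ \ τ, |w v|
      else 0 := by
  rw [upLap_of_ne X w k hne, abs_mul, abs_boundary, abs_boundary, Finset.union_sdiff_left,
    Finset.union_sdiff_right]
  by_cases h : τ ∪ σ ∈ X ∧ (τ ∪ σ).card = k + 2
  · simp [h, hτ, hσ, mul_comm]
  · simp [h, ← and_assoc]

end UpLaplacian

section UpWalk

variable {n k : ℕ} (X : Finset (Finset (Fin n))) {w : Fin n → ℝ} {σ : OSimp n}
  {τ : Finset (Fin n)}

lemma existsUnique_upAdj (hne : σ.1 ≠ τ) (hcard : τ.card = σ.1.card) (hX : σ.1 ∪ τ ∈ X)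
    (hunion : (σ.1 ∪ τ).card = σ.1.card + 1) : ∃! b, UpAdj n X σ (τ, b) := by
  obtain ⟨v, hv⟩ : ∃ v, τ \ σ.1 = {v} := by
    rw [← Finset.card_eq_one, ← Finset.union_sdiff_left,
      Finset.card_sdiff_of_subset Finset.subset_union_left, hunion, Nat.add_sub_cancel_left]
  obtain ⟨v', hv'⟩ : ∃ v', σ.1 \ τ = {v'} := by
    rw [← Finset.card_eq_one, ← Finset.union_sdiff_right,
      Finset.card_sdiff_of_subset Finset.subset_union_right, hunion, hcard,
      Nat.add_sub_cancel_left]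
  have hiff (b : Bool) : UpAdj n X σ (τ, b) ↔
      (σ.2 ^^ faceFlip n (σ.1 ∪ τ) v) = (b ^^ faceFlip n (σ.1 ∪ τ) v') := by
    simp [UpAdj, hne, hX, hunion, hcard, hv, hv']
  refine ⟨(σ.2 ^^ faceFlip n (σ.1 ∪ τ) v) ^^ faceFlip n (σ.1 ∪ τ) v', ?_, fun b hb => ?_⟩
  · simp [hiff]
  · simp [(hiff b).1 hb]

lemma sum_ite_upAdj (hne : σ.1 ≠ τ) (hcard : τ.card = σ.1.card) (a : ℝ) :
    ∑ b, (if UpAdj n X σ (τ, b) then a else 0) =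
      if σ.1 ∪ τ ∈ X ∧ (σ.1 ∪ τ).card = σ.1.card + 1 then a else 0 := by
  split_ifs with h
  · obtain ⟨b, hb, hunique⟩ := existsUnique_upAdj X hne hcard h.1 h.2
    rw [Fintype.sum_eq_single b fun b' hb' => if_neg fun hadj => hb' (hunique b' hadj), if_pos hb]
  · exact Finset.sum_eq_zero fun b _ => if_neg fun hadj => h ⟨hadj.2.1, hadj.2.2.1⟩

lemma sum_Pup_same_support (hσX : σ.1 ∈ X) (hσ : σ.1.card = k + 1) :
    ∑ b, Pup n X w k (some σ) (some (σ.1, b)) = |upLap n X w k σ.1 σ.1| / Kup n X w k := by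
  have hnadj (b : Bool) : ¬ UpAdj n X σ (σ.1, b) := fun h => h.1 rfl
  have hnonneg : 0 ≤ ∑ u ∈ upSet n X σ.1, w u ^ 2 := Finset.sum_nonneg fun u _ => sq_nonneg (w u)
  rw [upLap_self X w hσ, abs_of_nonneg hnonneg]
  simp [Pup, hσX, hσ, hnadj, Prod.ext_iff]

lemma sum_Pup_of_ne (hw : ∀ v, 0 ≤ w v) (hσX : σ.1 ∈ X) (hσ : σ.1.card = k + 1)
    (hτX : τ ∈ X) (hτ : τ.card = k + 1) (hne : σ.1 ≠ τ) :
    ∑ b, Pup n X w k (some σ) (some (τ, b)) = |upLap n X w k τ σ.1| / Kup n X w k := by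
  have hstate (b : Bool) : σ ≠ (τ, b) := fun h => hne (congrArg Prod.fst h)
  simp only [Pup, hσX, hσ, hτX, hτ, and_self, if_true, if_neg (hstate _)]
  rw [sum_ite_upAdj X hne (hτ.trans hσ.symm), abs_upLap_of_ne X w hτ hσ hne.symm, hσ,
    Finset.union_comm, ite_div, zero_div]
  simp only [abs_of_nonneg (hw _), mul_comm]

lemma sum_Pup_orientations (hw : ∀ v, 0 ≤ w v) (hσX : σ.1 ∈ X) (hσ : σ.1.card = k + 1)
    (τ : Finset (Fin n)) :
    ∑ b, Pup n X w k (some σ) (some (τ, b)) =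
      if τ ∈ simplices n X k then |upLap n X w k τ σ.1| / Kup n X w k else 0 := by
  split_ifs with hτ
  · obtain ⟨hτX, hτk⟩ := Finset.mem_filter.1 hτ
    obtain rfl | hne := eq_or_ne σ.1 τ
    · exact sum_Pup_same_support X hσX hσ
    · exact sum_Pup_of_ne X hw hσX hσ hτX hτk hne
  · exact Finset.sum_eq_zero fun b _ => if_neg fun h => hτ (Finset.mem_filter.2 h.2.2)

lemma sum_Pup_eq_one (hw : ∀ v, 0 ≤ w v) :
    ∀ σ : SState n, valid n X k σ → ∑ σ', Pup n X w k σ σ' = 1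
  | none, _ => by simp [Fintype.sum_option, Pup]
  | some σ, ⟨hσX, hσ⟩ => by
    have habsorb : Pup n X w k (some σ) none = etaUp n X w k σ := if_pos ⟨hσX, hσ⟩
    rw [Fintype.sum_option, Fintype.sum_prod_type, habsorb, etaUp]
    simp only [sum_Pup_orientations X hw hσX hσ, Finset.sum_ite_mem, Finset.univ_inter,
      Finset.sum_div, sub_add_cancel]

lemma le_Kup (hτX : τ ∈ X) (hτ : τ.card = k + 1) :
    ∑ u ∈ τᶜ, ∑ v ∈ insert u τ, w u * w v ≤ Kup n X w k := by
  refine le_csSup (Set.Finite.bddAbove ?_) ⟨τ, hτX, hτ, rfl⟩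
  refine (Set.finite_range fun σ : Finset (Fin n) =>
    ∑ u ∈ σᶜ, ∑ v ∈ insert u σ, w u * w v).subset ?_
  rintro _ ⟨σ, -, -, rfl⟩
  exact ⟨σ, rfl⟩

lemma Kup_nonneg (hw : ∀ v, 0 ≤ w v) : 0 ≤ Kup n X w k := by
  refine Real.sSup_nonneg ?_
  rintro _ ⟨σ, -, -, rfl⟩
  exact Finset.sum_nonneg fun u _ => Finset.sum_nonneg fun v _ => mul_nonneg (hw u) (hw v)

lemma etaUp_nonneg (hw : ∀ v, 0 ≤ w v) (hσX : σ.1 ∈ X) (hσ : σ.1.card = k + 1) :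
    0 ≤ etaUp n X w k σ := by
  have hle : ∑ τ ∈ simplices n X k, |upLap n X w k τ σ.1| ≤ Kup n X w k :=
    calc ∑ τ ∈ simplices n X k, |upLap n X w k τ σ.1|
        ≤ ∑ τ, |upLap n X w k τ σ.1| :=
          Finset.sum_le_univ_sum_of_nonneg fun τ => abs_nonneg _
      _ ≤ ∑ u ∈ σ.1ᶜ, ∑ v ∈ insert u σ.1, w u * w v := by
          simpa only [abs_of_nonneg (hw _)] using sum_abs_upLap_le X w k σ.1
      _ ≤ Kup n X w k := le_Kup X hσX hσ
  exact sub_nonneg.2 (div_le_one_of_le₀ hle (Kup_nonneg X hw))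

lemma Pup_nonneg (hw : ∀ v, 0 ≤ w v) : ∀ σ σ' : SState n, 0 ≤ Pup n X w k σ σ'
  | none, none => zero_le_one
  | none, some _ => le_rfl
  | some σ, none => by
    simp only [Pup]
    split_ifs with hσ
    · exact etaUp_nonneg X hw hσ.1 hσ.2
    · exact le_rfl
  | some σ, some σ' => by
    have hK : 0 ≤ Kup n X w k := Kup_nonneg X hw
    have hsum (s : Finset (Fin n)) : 0 ≤ ∑ v ∈ s, w v := Finset.sum_nonneg fun v _ => hw v
    simp only [Pup]
    split_ifs
    · exact div_nonneg (Finset.sum_nonneg fun u _ => sq_nonneg (w u)) hK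
    · exact div_nonneg (mul_nonneg (hsum _) (hsum _)) hK
    all_goals exact le_rfl

end UpWalk

theorem Pup_row_stochastic_general (n k : ℕ) (X : Finset (Finset (Fin n))) (w : Fin n → ℝ)
    (hw : ∀ v, 0 ≤ w v) (σ : SState n) (hσ : valid n X k σ) :
    (∀ σ' : SState n, 0 ≤ Pup n X w k σ σ' ∧ Pup n X w k σ σ' ≤ 1) ∧
      ∑ σ' : SState n, Pup n X w k σ σ' = 1 := by
  have hsum : ∑ σ' : SState n, Pup n X w k σ σ' = 1 := sum_Pup_eq_one X hw σ hσ
  refine ⟨fun σ' => ⟨Pup_nonneg X hw σ σ', ?_⟩, hsum⟩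
  rw [← hsum]
  exact Finset.single_le_sum (fun σ'' _ => Pup_nonneg X hw σ σ'') (Finset.mem_univ σ')

/-- The up-walk transition matrix `P^{up}` on `S_k = X_k^± ∪ {Θ}` is
row-stochastic: every entry lies in `[0,1]` and every row sums to `1`. -/
theorem Pup_row_stochastic (n k : ℕ) (X : Finset (Finset (Fin n))) (hX : IsComplex n X)
    (w : Fin n → ℝ) (hw : ∀ v, 0 < w v) (hne : (simplices n X k).Nonempty) :
    ∀ σ : SState n, valid n X k σ →
      (∀ σ' : SState n, 0 ≤ Pup n X w k σ σ' ∧ Pup n X w k σ σ' ≤ 1) ∧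
      ∑ σ' : SState n, Pup n X w k σ σ' = 1 := by
  exact Pup_row_stochastic_general n k X w fun v => (hw v).le

end QWSC
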